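/- For all subsets T₁, T₂ ⊆ 𝒦, the set function b⁻(T) = I(V_T; Z | Q) satisfies the submodular-type inequality b⁻(T₁) + b⁻(T₂) ≤ b⁻(T₁ ∩ T₂) + b⁻(T₁ ∪ T₂), i.e., I(V_{T₁}; Z | Q) + I(V_{T₂}; Z | Q) ≤ I(V_{T₁∩T₂}; Z | Q) + I(V_{T₁∪T₂}; Z | Q). -/

import Mathlib

open scoped Classical

/-- Probability that the random variable `X` (on the finite sample space `Ω` with
probability mass function `p`) takes the value `a`. -/
noncomputable def prob {Ω : Type} [Fintype Ω] (p : Ω → ℝ) {α : Type} (X : Ω → α)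
    (a : α) : ℝ :=
  ∑ ω : Ω, if X ω = a then p ω else 0

/-- Shannon entropy (base 2) of the random variable `X`, with the convention
`0 · log 0 = 0`. -/
noncomputable def ent {Ω : Type} [Fintype Ω] (p : Ω → ℝ) {α : Type} [Fintype α]
    (X : Ω → α) : ℝ :=
  -∑ a : α, prob p X a * Real.logb 2 (prob p X a)

/-- Conditional mutual information `I(X; Y | Z) = H(X,Z) + H(Y,Z) - H(X,Y,Z) - H(Z)`. -/
noncomputable def condMI {Ω : Type} [Fintype Ω] (p : Ω → ℝ) {α β γ : Type}
    [Fintype α] [Fintype β] [Fintype γ] (X : Ω → α) (Y : Ω → β) (Z : Ω → γ) : ℝ :=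
  ent p (fun ω => (X ω, Z ω)) + ent p (fun ω => (Y ω, Z ω))
    - ent p (fun ω => (X ω, Y ω, Z ω)) - ent p Z

/-- The tuple-valued random variable `V_J = (V_j)_{j ∈ J}`. -/
def VJ {Ω : Type} {K : ℕ} {α : Fin K → Type} (V : (i : Fin K) → Ω → α i)
    (J : Finset (Fin K)) : Ω → ((j : J) → α j) :=
  fun ω j => V j ω

/-- `V_1, …, V_K` are mutually conditionally independent given `Q`:
`P(V_1 = v_1, …, V_K = v_K, Q = q) · P(Q = q)^(K-1) = ∏ i, P(V_i = v_i, Q = q)`. -/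
def CondIndep {Ω : Type} [Fintype Ω] {𝒬 : Type} {K : ℕ} {α : Fin K → Type}
    (p : Ω → ℝ) (Q : Ω → 𝒬) (V : (i : Fin K) → Ω → α i) : Prop :=
  ∀ (q : 𝒬) (v : (i : Fin K) → α i),
    prob p (fun ω => ((fun i => V i ω : (i : Fin K) → α i), Q ω)) (v, q)
        * (prob p Q q) ^ (K - 1)
      = ∏ i : Fin K, prob p (fun ω => (V i ω, Q ω)) (v i, q)

/-!
Conditional mutual information is a difference of conditional entropies,
`I(V_T; Z | Q) = H(V_T | Q) - H(V_T | Z, Q)`. By strong subadditivity `T ↦ H(V_T | W)` is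
submodular for every `W`, with defect `I(V_{T₁}; V_{T₂} | V_{T₁ ∩ T₂}, W)`; under conditional
independence given `Q` the defect vanishes for `W = Q`. So `b⁻` is a modular function minus a
submodular one.

That independence makes the defect vanish needs no computation of marginals: independence says that
`H(V_𝒦 | Q) = ∑ i, H(V_i | Q)`, and a submodular function vanishing at `∅` which is at least the sum
of its values on singletons at the full set equals that sum at every set.
-/

section SubmodularSetFunction

variable {ι M : Type*} [DecidableEq ι]

/-- Submodularity of a set function on the finite subsets of `ι`. -/
def IsSubmodular [Add M] [LE M] (f : Finset ι → M) : Prop :=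
  ∀ S T, f (S ∩ T) + f (S ∪ T) ≤ f S + f T

variable [AddCommMonoid M] [PartialOrder M] {f : Finset ι → M}

lemma IsSubmodular.apply_union_le_add_sum_singleton [IsOrderedAddMonoid M] (hf : IsSubmodular f)
    (h0 : 0 ≤ f ∅) {S T : Finset ι} (hST : Disjoint S T) :
    f (S ∪ T) ≤ f S + ∑ i ∈ T, f {i} := by
  induction T using Finset.induction_on with
  | empty => simp
  | insert i T hi ih =>
    rw [Finset.disjoint_insert_right] at hST
    have hdisj : (S ∪ T) ∩ {i} = ∅ := by grind
    have hunion : S ∪ T ∪ {i} = S ∪ insert i T := by grind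
    calc f (S ∪ insert i T)
        ≤ f ∅ + f (S ∪ insert i T) := le_add_of_nonneg_left h0
      _ ≤ f (S ∪ T) + f {i} := by simpa only [hdisj, hunion] using hf (S ∪ T) {i}
      _ ≤ f S + ∑ j ∈ T, f {j} + f {i} := by gcongr; exact ih hST.2
      _ = f S + ∑ j ∈ insert i T, f {j} := by rw [Finset.sum_insert hi]; abel

lemma IsSubmodular.apply_eq_sum_singleton [IsOrderedCancelAddMonoid M] [Fintype ι]
    (hf : IsSubmodular f) (h0 : f ∅ = 0) (huniv : ∑ i, f {i} ≤ f Finset.univ) (T : Finset ι) :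
    f T = ∑ i ∈ T, f {i} := by
  apply le_antisymm
  · simpa [h0] using hf.apply_union_le_add_sum_singleton h0.ge (Finset.disjoint_empty_left T)
  · refine le_of_add_le_add_right (a := ∑ i ∈ Tᶜ, f {i}) ?_
    calc ∑ i ∈ T, f {i} + ∑ i ∈ Tᶜ, f {i}
        = ∑ i, f {i} := Finset.sum_add_sum_compl T _
      _ ≤ f (T ∪ Tᶜ) := by rwa [Finset.union_compl]
      _ ≤ f T + ∑ i ∈ Tᶜ, f {i} :=
        hf.apply_union_le_add_sum_singleton h0.ge disjoint_compl_right

end SubmodularSetFunction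

lemma sum_mul_logb_le_sum_mul_logb {ι : Type*} {s : Finset ι} {f g : ι → ℝ} {b : ℝ} (hb : 1 < b)
    (hf : ∀ i ∈ s, 0 ≤ f i) (hg : ∀ i ∈ s, 0 ≤ g i) (hfg : ∀ i ∈ s, 0 < f i → 0 < g i)
    (hsum : ∑ i ∈ s, g i ≤ ∑ i ∈ s, f i) :
    ∑ i ∈ s, f i * Real.logb b (g i) ≤ ∑ i ∈ s, f i * Real.logb b (f i) := by
  have hlog : ∀ i ∈ s, f i * Real.log (g i) - f i * Real.log (f i) ≤ g i - f i := by
    intro i hi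
    rcases (hf i hi).eq_or_lt with h | h
    · simpa [← h] using hg i hi
    · calc f i * Real.log (g i) - f i * Real.log (f i)
          = f i * Real.log (g i / f i) := by rw [Real.log_div (hfg i hi h).ne' h.ne', mul_sub]
        _ ≤ f i * (g i / f i - 1) := by
          gcongr
          exact Real.log_le_sub_one_of_pos (div_pos (hfg i hi h) h)
        _ = g i - f i := by field_simp
  have hle := Finset.sum_le_sum hlog
  rw [Finset.sum_sub_distrib, Finset.sum_sub_distrib] at hle
  simp only [Real.logb, ← mul_div_assoc, ← Finset.sum_div]
  have := Real.log_pos hb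
  exact div_le_div_of_nonneg_right (by linarith) this.le

section Probability

variable {Ω α β γ : Type} [Fintype Ω] {p : Ω → ℝ}

lemma prob_nonneg (hp : ∀ ω, 0 ≤ p ω) (X : Ω → α) (a : α) : 0 ≤ prob p X a :=
  Finset.sum_nonneg fun ω _ => by split_ifs <;> simp [hp]

lemma prob_apply_pos (hp : ∀ ω, 0 ≤ p ω) (X : Ω → α) {ω : Ω} (h : 0 < p ω) :
    0 < prob p X (X ω) :=
  Finset.sum_pos' (fun ω' _ => by split_ifs <;> simp [hp]) ⟨ω, Finset.mem_univ _, by simpa using h⟩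

lemma prob_le_prob_comp (hp : ∀ ω, 0 ≤ p ω) (X : Ω → α) (φ : α → β) (a : α) :
    prob p X a ≤ prob p (fun ω => φ (X ω)) (φ a) := by
  refine Finset.sum_le_sum fun ω _ => ?_
  by_cases h : X ω = a
  · simp [h]
  · rw [if_neg h]
    split_ifs <;> simp [hp]

lemma sum_prob_mul [Fintype α] (X : Ω → α) (f : α → ℝ) :
    ∑ a, prob p X a * f a = ∑ ω, p ω * f (X ω) := by
  simp only [prob, Finset.sum_mul, ite_mul, zero_mul]
  rw [Finset.sum_comm]
  simp

lemma sum_prob [Fintype α] (X : Ω → α) : ∑ a, prob p X a = ∑ ω, p ω := by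
  simpa using sum_prob_mul (p := p) X fun _ => 1

lemma sum_prob_prodMk [Fintype α] (X : Ω → α) (W : Ω → γ) (w : γ) :
    ∑ x, prob p (fun ω => (X ω, W ω)) (x, w) = prob p W w := by
  simp only [prob, Prod.mk.injEq, ite_and]
  rw [Finset.sum_comm]
  simp

lemma sum_prob_mul_prob_div_prob [Fintype α] [Fintype β] [Fintype γ]
    (X : Ω → α) (Y : Ω → β) (W : Ω → γ) :
    ∑ t : α × β × γ, prob p (fun ω => (X ω, W ω)) (t.1, t.2.2) *
      prob p (fun ω => (Y ω, W ω)) (t.2.1, t.2.2) / prob p W t.2.2 = ∑ ω, p ω := by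
  simp only [Fintype.sum_prod_type]
  rw [Finset.sum_congr rfl fun x _ => Finset.sum_comm, Finset.sum_comm]
  simp only [← Finset.sum_div, ← Finset.mul_sum, ← Finset.sum_mul, sum_prob_prodMk,
    mul_self_div_self, sum_prob]

end Probability

section Entropy

variable {Ω α β γ : Type} [Fintype Ω] [Fintype α] [Fintype β] [Fintype γ] {p : Ω → ℝ}

lemma ent_eq_sum (X : Ω → α) :
    ent p X = -∑ ω, p ω * Real.logb 2 (prob p X (X ω)) := by
  rw [ent, sum_prob_mul X fun a => Real.logb 2 (prob p X a)]

lemma ent_congr {X : Ω → α} {Y : Ω → β} (h : ∀ ω ω', X ω = X ω' ↔ Y ω = Y ω') :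
    ent p X = ent p Y := by
  simp only [ent_eq_sum, prob, h]

lemma ent_comp_eq_sum_prob (X : Ω → α) (φ : α → β) :
    ent p (fun ω => φ (X ω)) =
      -∑ a, prob p X a * Real.logb 2 (prob p (fun ω => φ (X ω)) (φ a)) := by
  rw [ent_eq_sum, sum_prob_mul X fun a => Real.logb 2 (prob p (fun ω => φ (X ω)) (φ a))]

-- Gibbs' inequality for the law of `(X, Y, W)` against `P(x, w) P(y, w) / P(w)`, under which
-- `X` and `Y` are conditionally independent given `W`.
lemma condMI_nonneg (hp : ∀ ω, 0 ≤ p ω) (X : Ω → α) (Y : Ω → β) (W : Ω → γ) :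
    0 ≤ condMI p X Y W := by
  let XYW : Ω → α × β × γ := fun ω => (X ω, Y ω, W ω)
  let P : α × β × γ → ℝ := prob p XYW
  let A : α × β × γ → ℝ := fun t => prob p (fun ω => (X ω, W ω)) (t.1, t.2.2)
  let B : α × β × γ → ℝ := fun t => prob p (fun ω => (Y ω, W ω)) (t.2.1, t.2.2)
  let D : α × β × γ → ℝ := fun t => prob p W t.2.2
  have hA : ∀ t, 0 < P t → 0 < A t := fun t h =>
    h.trans_le (prob_le_prob_comp hp XYW (fun t => (t.1, t.2.2)) t)
  have hB : ∀ t, 0 < P t → 0 < B t := fun t h =>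
    h.trans_le (prob_le_prob_comp hp XYW (fun t => (t.2.1, t.2.2)) t)
  have hD : ∀ t, 0 < P t → 0 < D t := fun t h =>
    h.trans_le (prob_le_prob_comp hp XYW (fun t => t.2.2) t)
  have hgibbs : ∑ t, P t * Real.logb 2 (A t * B t / D t) ≤ ∑ t, P t * Real.logb 2 (P t) := by
    refine sum_mul_logb_le_sum_mul_logb one_lt_two (fun t _ => prob_nonneg hp _ t) (fun t _ => ?_)
      (fun t _ h => div_pos (mul_pos (hA t h) (hB t h)) (hD t h)) ?_
    · exact div_nonneg (mul_nonneg (prob_nonneg hp _ _) (prob_nonneg hp _ _)) (prob_nonneg hp _ _)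
    · exact ((sum_prob_mul_prob_div_prob X Y W).trans (sum_prob XYW).symm).le
  have hlogb : ∀ t, P t * Real.logb 2 (A t * B t / D t) =
      P t * Real.logb 2 (A t) + P t * Real.logb 2 (B t) - P t * Real.logb 2 (D t) := by
    intro t
    rcases (prob_nonneg hp XYW t).eq_or_lt with h | h
    · simp [P, ← h]
    · rw [Real.logb_div (mul_pos (hA t h) (hB t h)).ne' (hD t h).ne',
        Real.logb_mul (hA t h).ne' (hB t h).ne']
      ring
  simp only [hlogb, Finset.sum_add_distrib, Finset.sum_sub_distrib] at hgibbs
  have hentA := ent_comp_eq_sum_prob (p := p) XYW fun t => (t.1, t.2.2)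
  have hentB := ent_comp_eq_sum_prob (p := p) XYW fun t => (t.2.1, t.2.2)
  have hentD := ent_comp_eq_sum_prob (p := p) XYW fun t => t.2.2
  rw [condMI, hentA, hentB, hentD, ent]
  linarith

/-- Conditional entropy `H(X | Q) = H(X, Q) - H(Q)`. -/
noncomputable def condEnt (p : Ω → ℝ) (X : Ω → α) (Q : Ω → γ) : ℝ :=
  ent p (fun ω => (X ω, Q ω)) - ent p Q

lemma condMI_eq_condEnt_sub_condEnt (X : Ω → α) (Z : Ω → β) (Q : Ω → γ) :
    condMI p X Z Q = condEnt p X Q - condEnt p X fun ω => (Z ω, Q ω) := by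
  simp only [condMI, condEnt]
  ring

lemma condEnt_eq_sum (X : Ω → α) (Q : Ω → γ) :
    condEnt p X Q = ∑ ω, p ω * (Real.logb 2 (prob p Q (Q ω)) -
      Real.logb 2 (prob p (fun ω => (X ω, Q ω)) (X ω, Q ω))) := by
  simp only [condEnt, ent_eq_sum, mul_sub, Finset.sum_sub_distrib]
  ring

lemma condEnt_congr {X : Ω → α} {Y : Ω → β} (h : ∀ ω ω', X ω = X ω' ↔ Y ω = Y ω') (Q : Ω → γ) :
    condEnt p X Q = condEnt p Y Q := by
  have hpair : ent p (fun ω => (X ω, Q ω)) = ent p (fun ω => (Y ω, Q ω)) :=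
    ent_congr fun ω ω' => by simp only [Prod.mk.injEq, h]
  rw [condEnt, condEnt, hpair]

end Entropy

section Family

variable {Ω 𝒬 : Type} {K : ℕ} {α : Fin K → Type} {V : (i : Fin K) → Ω → α i}

lemma VJ_eq_iff {J : Finset (Fin K)} {ω ω' : Ω} :
    VJ V J ω = VJ V J ω' ↔ ∀ j ∈ J, V j ω = V j ω' := by
  simp [VJ, funext_iff]

variable [Fintype Ω] [Fintype 𝒬] [∀ i, Fintype (α i)] {p : Ω → ℝ} {Q : Ω → 𝒬}

lemma condEnt_VJ_empty : condEnt p (VJ V ∅) Q = 0 :=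
  sub_eq_zero.2 (ent_congr fun ω ω' => by simp [VJ_eq_iff])

lemma condEnt_VJ_singleton (i : Fin K) : condEnt p (VJ V {i}) Q = condEnt p (V i) Q :=
  condEnt_congr (fun ω ω' => by simp [VJ_eq_iff]) Q

lemma condEnt_VJ_univ : condEnt p (VJ V Finset.univ) Q = condEnt p (fun ω i => V i ω) Q :=
  condEnt_congr (fun ω ω' => by rw [VJ_eq_iff]; simp [funext_iff]) Q

lemma condMI_VJ_VJ_inter (S T : Finset (Fin K)) :
    condMI p (VJ V S) (VJ V T) (fun ω => (VJ V (S ∩ T) ω, Q ω)) =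
      condEnt p (VJ V S) Q + condEnt p (VJ V T) Q -
        (condEnt p (VJ V (S ∩ T)) Q + condEnt p (VJ V (S ∪ T)) Q) := by
  have hS : ent p (fun ω => (VJ V S ω, VJ V (S ∩ T) ω, Q ω)) = ent p (fun ω => (VJ V S ω, Q ω)) :=
    ent_congr fun ω ω' => by simp only [Prod.mk.injEq, VJ_eq_iff]; grind
  have hT : ent p (fun ω => (VJ V T ω, VJ V (S ∩ T) ω, Q ω)) = ent p (fun ω => (VJ V T ω, Q ω)) :=
    ent_congr fun ω ω' => by simp only [Prod.mk.injEq, VJ_eq_iff]; grind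
  have hST : ent p (fun ω => (VJ V S ω, VJ V T ω, VJ V (S ∩ T) ω, Q ω)) =
      ent p (fun ω => (VJ V (S ∪ T) ω, Q ω)) :=
    ent_congr fun ω ω' => by simp only [Prod.mk.injEq, VJ_eq_iff]; grind
  rw [condMI, hS, hT, hST]
  simp only [condEnt]
  ring

lemma isSubmodular_condEnt_VJ (hp : ∀ ω, 0 ≤ p ω) (V : (i : Fin K) → Ω → α i) (Q : Ω → 𝒬) :
    IsSubmodular fun T => condEnt p (VJ V T) Q := fun S T => by
  rw [← sub_nonneg, ← condMI_VJ_VJ_inter]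
  exact condMI_nonneg hp _ _ _

namespace CondIndep

lemma condEnt_pi (hp : ∀ ω, 0 ≤ p ω) (hind : CondIndep p Q V) :
    condEnt p (fun ω i => V i ω) Q = ∑ i, condEnt p (V i) Q := by
  -- The exponent `K - 1` in `CondIndep` is truncated at `K = 0`.
  rcases K.eq_zero_or_pos with rfl | hK
  · rw [← condEnt_VJ_univ, Finset.univ_eq_empty, condEnt_VJ_empty, Finset.sum_empty]
  simp only [condEnt_eq_sum]
  rw [Finset.sum_comm]
  refine Finset.sum_congr rfl fun ω _ => ?_
  rcases (hp ω).eq_or_lt with h | h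
  · simp [← h]
  have hQ := prob_apply_pos hp Q h
  have hV := prob_apply_pos hp (fun ω => (fun i => V i ω, Q ω)) h
  have hlogb := congrArg (Real.logb 2) (hind (Q ω) fun i => V i ω)
  rw [Real.logb_mul hV.ne' (pow_pos hQ _).ne', Real.logb_pow,
    Real.logb_prod _ _ fun i _ => (prob_apply_pos hp (fun ω => (V i ω, Q ω)) h).ne',
    Nat.cast_pred hK] at hlogb
  rw [← Finset.mul_sum, Finset.sum_sub_distrib, ← hlogb]
  simp only [Finset.sum_const, Finset.card_univ, Fintype.card_fin, nsmul_eq_mul]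
  ring

lemma condEnt_VJ (hp : ∀ ω, 0 ≤ p ω) (hind : CondIndep p Q V) (T : Finset (Fin K)) :
    condEnt p (VJ V T) Q = ∑ i ∈ T, condEnt p (V i) Q := by
  have huniv : ∑ i, condEnt p (VJ V {i}) Q ≤ condEnt p (VJ V Finset.univ) Q := by
    simp only [condEnt_VJ_singleton, condEnt_VJ_univ, hind.condEnt_pi hp, le_refl]
  simpa only [condEnt_VJ_singleton] using
    (isSubmodular_condEnt_VJ hp V Q).apply_eq_sum_singleton condEnt_VJ_empty huniv T

lemma condMI_VJ_VJ_inter_eq_zero (hp : ∀ ω, 0 ≤ p ω) (hind : CondIndep p Q V)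
    (S T : Finset (Fin K)) :
    condMI p (VJ V S) (VJ V T) (fun ω => (VJ V (S ∩ T) ω, Q ω)) = 0 := by
  rw [condMI_VJ_VJ_inter, sub_eq_zero, add_comm (condEnt p (VJ V (S ∩ T)) Q)]
  simp only [hind.condEnt_VJ hp, Finset.sum_union_inter]

end CondIndep

end Family

theorem bminus_submodular_general {Ω 𝒬 𝒵 : Type} [Fintype Ω] [Fintype 𝒬] [Fintype 𝒵] {K : ℕ}
    {α : Fin K → Type} [∀ i, Fintype (α i)] {p : Ω → ℝ} (hp : ∀ ω, 0 ≤ p ω)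
    (Q : Ω → 𝒬) (Z : Ω → 𝒵) (V : (i : Fin K) → Ω → α i) (T₁ T₂ : Finset (Fin K))
    (hind : condMI p (VJ V T₁) (VJ V T₂) (fun ω => (VJ V (T₁ ∩ T₂) ω, Q ω)) = 0) :
    condMI p (VJ V T₁) Z Q + condMI p (VJ V T₂) Z Q
      ≤ condMI p (VJ V (T₁ ∩ T₂)) Z Q + condMI p (VJ V (T₁ ∪ T₂)) Z Q := by
  have hsub := isSubmodular_condEnt_VJ hp V (fun ω => (Z ω, Q ω)) T₁ T₂
  rw [condMI_VJ_VJ_inter] at hind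
  simp only [condMI_eq_condEnt_sub_condEnt]
  linarith

/-- The set function `b⁻(T) = I(V_T; Z | Q)` is submodular:
`b⁻(T₁) + b⁻(T₂) ≤ b⁻(T₁ ∩ T₂) + b⁻(T₁ ∪ T₂)`. -/
theorem bminus_submodular {Ω 𝒬 𝒴 𝒵 : Type} [Fintype Ω] [Fintype 𝒬] [Fintype 𝒴]
    [Fintype 𝒵] {K : ℕ} {α : Fin K → Type} [∀ i, Fintype (α i)]
    (p : Ω → ℝ) (hp : ∀ ω, 0 ≤ p ω) (hp1 : ∑ ω : Ω, p ω = 1)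
    (Q : Ω → 𝒬) (Y : Ω → 𝒴) (Z : Ω → 𝒵) (V : (i : Fin K) → Ω → α i)
    (hind : CondIndep p Q V) (T₁ T₂ : Finset (Fin K)) :
    condMI p (VJ V T₁) Z Q + condMI p (VJ V T₂) Z Q
      ≤ condMI p (VJ V (T₁ ∩ T₂)) Z Q + condMI p (VJ V (T₁ ∪ T₂)) Z Q :=
  bminus_submodular_general hp Q Z V T₁ T₂ (hind.condMI_VJ_VJ_inter_eq_zero hp T₁ T₂)
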